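/- Let d ≥ 2, κ > 0, 0 < ε < 1, and let a ∈ C_c^∞(ℝ^{d−1}) be supported in {η : 1 − ε ≤ |η| ≤ 1 + ε}. Let B : (0,∞) × [0,∞) → ℝ be continuous, twice continuously differentiable in the second variable with locally bounded derivatives, and satisfy κ y ∂_y² B(μ, y) + ∂_y B(μ, y) + (μ − κ y) B(μ, y) = 0 for all μ > 0, y > 0. For j ≥ 0 define U^j(t, x_d, x′) := (2π)^{1−d} e^{i t 2^j} ∫_{ℝ^{d−1}} e^{i x′·ξ′} B(2^{2j}/|ξ′|, |ξ′| x_d) a(2^{−2j} ξ′) dξ′. Then: (i) U^j(t, x_d, x′) = 2^{2j(d−1)} U^0(2^j t, 2^{2j} x_d, 2^{2j} x′) for all t ∈ ℝ and (x_d, x′) ∈ (0,∞) × ℝ^{d−1}; and (ii) U^j is an exact solution of the acoustic wave equation ∂_t² U^j − κ x_d Δ_x U^j − ∂_{x_d} U^j = 0 on ℝ × Ω. -/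

import Mathlib

open Real MeasureTheory
open scoped RealInnerProductSpace

noncomputable section

/-- The wave packet
`U^j(t,x_d,x′) = (2π)^{1−d} e^{it2^j} ∫ e^{ix′·ξ} B(2^{2j}/|ξ|, |ξ|x_d) a(2^{−2j}ξ) dξ`. -/
def wavePacket (d : ℕ) (B : ℝ → ℝ → ℝ)
    (a : EuclideanSpace ℝ (Fin (d - 1)) → ℝ) (j : ℕ)
    (t xd : ℝ) (x' : EuclideanSpace ℝ (Fin (d - 1))) : ℂ :=
  (((2 * π) ^ ((1 : ℤ) - (d : ℤ)) : ℝ) : ℂ) *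
    Complex.exp (Complex.I * ((t * 2 ^ j : ℝ) : ℂ)) *
    ∫ ξ : EuclideanSpace ℝ (Fin (d - 1)),
      Complex.exp (Complex.I * (⟪x', ξ⟫ : ℝ)) *
        (B ((2 : ℝ) ^ (2 * j) / ‖ξ‖) (‖ξ‖ * xd) : ℂ) *
        (a (((2 : ℝ) ^ (2 * j))⁻¹ • ξ) : ℂ)

/-!
Each gallery mode `e^{i x′·ξ} B(M/|ξ|, |ξ| x_d)` is an eigenfunction of the spatial operator
`κ x_d Δ + ∂_d` with eigenvalue `-M`, whatever `ξ` is; with `M = 2^{2j}` this matches the two time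
derivatives of `e^{it2^j}`, so the packet solves the wave equation as soon as all derivatives may be
taken under the integral. For the tangential derivatives this is the Fourier transform calculus. For
the normal ones, local bounds on `∂_y B` and `∂_y² B` uniform in the parameter follow from the
continuity of `B`: the mean value theorem bounds `∂_y B` at one point, Grönwall's inequality for the
mode equation propagates this, and the equation then bounds `∂_y² B`. The scaling identity is the
substitution `ξ ↦ 2^{2j} ξ`.
-/

open Set Filter Topology
open scoped FourierTransform

section SecondOrderODE

variable {α' α β : ℝ}

lemma abs_deriv_le_gronwallBound {f : ℝ → ℝ} {C L : ℝ} (hα : α' < α) (hL : 0 ≤ L)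
    (hf : ∀ y ∈ Icc α' β, DifferentiableAt ℝ f y)
    (hf' : ∀ y ∈ Icc α' β, DifferentiableAt ℝ (deriv f) y)
    (hC : ∀ y ∈ Icc α' β, |f y| ≤ C)
    (hf'' : ∀ y ∈ Icc α' β, |deriv (deriv f) y| ≤ L * (|deriv f y| + |f y|))
    {y : ℝ} (hy : y ∈ Icc α β) :
    |deriv f y| ≤ gronwallBound (2 * C / (α - α')) L (L * C) (β - α') := by
  have hαβ : α ≤ β := hy.1.trans hy.2
  have hα₀ : 0 < α - α' := sub_pos.2 hα
  have hC₀ : 0 ≤ C := (abs_nonneg _).trans (hC α ⟨hα.le, hαβ⟩)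
  -- The mean value theorem controls `f'` at some `c < α`; Grönwall propagates the bound from `c`.
  obtain ⟨c, ⟨hα'c, hcα⟩, hslope⟩ := exists_deriv_eq_slope f hα
    (fun z hz ↦ (hf z ⟨hz.1, hz.2.trans hαβ⟩).continuousAt.continuousWithinAt)
    (fun z hz ↦ (hf z ⟨hz.1.le, hz.2.le.trans hαβ⟩).differentiableWithinAt)
  have hderiv_c : ‖deriv f c‖ ≤ 2 * C / (α - α') := by
    rw [hslope, Real.norm_eq_abs, abs_div, abs_of_pos hα₀]
    gcongr
    linarith [abs_sub (f α) (f α'), hC α ⟨hα.le, hαβ⟩, hC α' ⟨le_rfl, hα.le.trans hαβ⟩]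
  have hsub : Icc c β ⊆ Icc α' β := Icc_subset_Icc_left hα'c.le
  have hgrowth : ∀ z ∈ Ico c β, ‖deriv (deriv f) z‖ ≤ L * ‖deriv f z‖ + L * C := by
    intro z hz
    have hz' := hsub (Ico_subset_Icc_self hz)
    calc ‖deriv (deriv f) z‖ ≤ L * (|deriv f z| + |f z|) := hf'' z hz'
      _ ≤ L * (|deriv f z| + C) := by gcongr; exact hC z hz'
      _ = L * ‖deriv f z‖ + L * C := mul_add _ _ _
  refine (norm_le_gronwallBound_of_norm_deriv_right_le
    (fun z hz ↦ (hf' z (hsub hz)).continuousAt.continuousWithinAt)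
    (fun z hz ↦ (hf' z (hsub (Ico_subset_Icc_self hz))).hasDerivAt.hasDerivWithinAt)
    hderiv_c hgrowth y ⟨hcα.le.trans hy.1, hy.2⟩).trans ?_
  exact gronwallBound_mono (by positivity) (by positivity) hL (by linarith [hy.2])

lemma exists_bound_deriv_of_linear_ode {P : Type*} [TopologicalSpace P] {K : Set P}
    (hK : IsCompact K) {f p q : P → ℝ → ℝ} (hα : α' < α)
    (hf : ContinuousOn (Function.uncurry f) (K ×ˢ Icc α' β))
    (hp : ContinuousOn (Function.uncurry p) (K ×ˢ Icc α' β))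
    (hq : ContinuousOn (Function.uncurry q) (K ×ˢ Icc α' β))
    (hdiff : ∀ k ∈ K, ∀ y ∈ Icc α' β, DifferentiableAt ℝ (f k) y)
    (hdiff' : ∀ k ∈ K, ∀ y ∈ Icc α' β, DifferentiableAt ℝ (deriv (f k)) y)
    (hode : ∀ k ∈ K, ∀ y ∈ Icc α' β,
      deriv (deriv (f k)) y = p k y * deriv (f k) y + q k y * f k y) :
    ∃ C, ∀ k ∈ K, ∀ y ∈ Icc α β, |deriv (f k) y| ≤ C ∧ |deriv (deriv (f k)) y| ≤ C := by
  have hcompact : IsCompact (K ×ˢ Icc α' β) := hK.prod isCompact_Icc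
  obtain ⟨C, hC⟩ := hcompact.exists_bound_of_continuousOn hf
  obtain ⟨Lp, hLp⟩ := hcompact.exists_bound_of_continuousOn hp
  obtain ⟨Lq, hLq⟩ := hcompact.exists_bound_of_continuousOn hq
  set L := max 0 (max Lp Lq) with hLdef
  have hL : 0 ≤ L := le_max_left _ _
  have hsecond : ∀ k ∈ K, ∀ y ∈ Icc α' β,
      |deriv (deriv (f k)) y| ≤ L * (|deriv (f k) y| + |f k y|) := by
    intro k hk y hy
    have hpL : |p k y| ≤ L := (hLp (k, y) ⟨hk, hy⟩).trans (by simp [hLdef])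
    have hqL : |q k y| ≤ L := (hLq (k, y) ⟨hk, hy⟩).trans (by simp [hLdef])
    calc |deriv (deriv (f k)) y| ≤ |p k y * deriv (f k) y| + |q k y * f k y| := by
          rw [hode k hk y hy]; exact abs_add_le _ _
      _ = |p k y| * |deriv (f k) y| + |q k y| * |f k y| := by rw [abs_mul, abs_mul]
      _ ≤ L * |deriv (f k) y| + L * |f k y| := by gcongr
      _ = L * (|deriv (f k) y| + |f k y|) := (mul_add _ _ _).symm
  set D := gronwallBound (2 * C / (α - α')) L (L * C) (β - α')
  refine ⟨max D (L * (D + C)), fun k hk y hy ↦ ?_⟩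
  have hy' : y ∈ Icc α' β := Icc_subset_Icc_left hα.le hy
  have hfC : ∀ z ∈ Icc α' β, |f k z| ≤ C := fun z hz ↦ hC (k, z) ⟨hk, hz⟩
  have hfirst : |deriv (f k) y| ≤ D :=
    abs_deriv_le_gronwallBound hα hL (hdiff k hk) (hdiff' k hk) hfC (hsecond k hk) hy
  refine ⟨hfirst.trans (le_max_left _ _), (hsecond k hk y hy').trans ?_⟩
  exact (mul_le_mul_of_nonneg_left (add_le_add hfirst (hfC y hy')) hL).trans (le_max_right _ _)

end SecondOrderODE

/-- A normal mode: the factor `f` of a separated solution `e^{i√lam t} e^{i x′·ξ} f(x_d)` of the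
acoustic wave equation with `|ξ| = r`, that is, an eigenfunction with eigenvalue `lam` of
`-κ y (∂_y² - r²) - ∂_y` on `(0, ∞)`. -/
structure IsNormalMode (κ lam r : ℝ) (f : ℝ → ℝ) : Prop where
  differentiableAt : ∀ y, 0 < y → DifferentiableAt ℝ f y
  differentiableAt_deriv : ∀ y, 0 < y → DifferentiableAt ℝ (deriv f) y
  ode : ∀ y, 0 < y → κ * y * (deriv (deriv f) y - r ^ 2 * f y) + deriv f y + lam * f y = 0

namespace IsNormalMode

lemma of_contDiffOn {κ μ : ℝ} {f : ℝ → ℝ} (hf : ContDiffOn ℝ 2 f (Ioi 0))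
    (hode : ∀ y, 0 < y → κ * y * deriv (deriv f) y + deriv f y + (μ - κ * y) * f y = 0) :
    IsNormalMode κ μ 1 f where
  differentiableAt y hy := (hf.differentiableOn two_ne_zero).differentiableAt (Ioi_mem_nhds hy)
  differentiableAt_deriv y hy :=
    ((hf.deriv_of_isOpen isOpen_Ioi one_add_one_eq_two.le).differentiableOn
      one_ne_zero).differentiableAt (Ioi_mem_nhds hy)
  ode y hy := by linear_combination hode y hy

lemma comp_mul_left {κ lam r c : ℝ} {f : ℝ → ℝ} (hf : IsNormalMode κ lam r f) (hc : 0 < c) :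
    IsNormalMode κ (c * lam) (c * r) (fun y ↦ f (c * y)) := by
  have hderiv : deriv (fun y ↦ f (c * y)) = fun y ↦ c * deriv f (c * y) :=
    funext fun y ↦ deriv_comp_mul_left c f y
  have hderiv' (y : ℝ) : deriv (fun y ↦ c * deriv f (c * y)) y =
      c * (c * deriv (deriv f) (c * y)) := by
    rw [deriv_const_mul_field, deriv_comp_mul_left c (deriv f) y, smul_eq_mul]
  refine ⟨fun y hy ↦ ?_, fun y hy ↦ ?_, fun y hy ↦ ?_⟩
  · exact (hf.differentiableAt _ (mul_pos hc hy)).comp y (by fun_prop)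
  · rw [hderiv]
    exact ((hf.differentiableAt_deriv _ (mul_pos hc hy)).comp y (by fun_prop)).const_mul c
  · rw [hderiv, hderiv']
    linear_combination c * hf.ode _ (mul_pos hc hy)

lemma deriv_deriv_eq {κ lam r : ℝ} {f : ℝ → ℝ} (hf : IsNormalMode κ lam r f) (hκ : κ ≠ 0)
    {y : ℝ} (hy : 0 < y) :
    deriv (deriv f) y = -(κ * y)⁻¹ * deriv f y + (r ^ 2 - lam * (κ * y)⁻¹) * f y := by
  have hy₀ : y ≠ 0 := hy.ne'
  field_simp
  linear_combination hf.ode y hy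

lemma exists_eventually_bound_deriv {P : Type*} [TopologicalSpace P] {K : Set P}
    (hK : IsCompact K) {κ lam : ℝ} {r : P → ℝ} {f : P → ℝ → ℝ} (hκ : κ ≠ 0)
    (hr : ContinuousOn r K) (hfc : ContinuousOn (Function.uncurry f) (K ×ˢ Ioi 0))
    (hf : ∀ k ∈ K, IsNormalMode κ lam (r k) (f k)) {y : ℝ} (hy : 0 < y) :
    ∃ C, ∀ᶠ z in 𝓝 y, ∀ k ∈ K, |deriv (f k) z| ≤ C ∧ |deriv (deriv (f k)) z| ≤ C := by
  have hpos {z : ℝ} (hz : z ∈ Icc (y / 3) (2 * y)) : 0 < z := by linarith [hz.1]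
  have hinv : ContinuousOn (fun kz : P × ℝ ↦ (κ * kz.2)⁻¹) (K ×ˢ Icc (y / 3) (2 * y)) :=
    ContinuousOn.inv₀ (by fun_prop) fun kz hkz ↦ mul_ne_zero hκ (hpos hkz.2).ne'
  have hr' : ContinuousOn (fun kz : P × ℝ ↦ r kz.1) (K ×ˢ Icc (y / 3) (2 * y)) :=
    hr.comp continuousOn_fst fun kz hkz ↦ hkz.1
  obtain ⟨C, hC⟩ := exists_bound_deriv_of_linear_ode (α' := y / 3) (α := y / 2) (β := 2 * y) hK
    (p := fun _ z ↦ -(κ * z)⁻¹) (q := fun k z ↦ r k ^ 2 - lam * (κ * z)⁻¹) (by linarith)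
    (hfc.mono (prod_mono_right fun _ hz ↦ hpos hz)) hinv.neg
    (ContinuousOn.sub (hr'.pow 2) (hinv.const_mul lam))
    (fun k hk z hz ↦ (hf k hk).differentiableAt z (hpos hz))
    (fun k hk z hz ↦ (hf k hk).differentiableAt_deriv z (hpos hz))
    (fun k hk z hz ↦ (hf k hk).deriv_deriv_eq hκ (hpos hz))
  refine ⟨C, ?_⟩
  filter_upwards [Icc_mem_nhds (half_lt_self hy) (lt_two_mul_self hy)] with z hz k hk
  exact hC k hk z hz

end IsNormalMode

section PlaneWaves

variable {E : Type*} [NormedAddCommGroup E] [InnerProductSpace ℝ E] [MeasurableSpace E]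
  {ν : Measure E}

/-- The superposition `∫ e^{i x·ξ} w(ξ) dν(ξ)` of plane waves, that is, the inverse Fourier
transform of `w ν` without the factor `(2π)^{-dim E}`. -/
def planeWaveIntegral (ν : Measure E) (w : E → ℂ) (x : E) : ℂ :=
  ∫ ξ, Complex.exp (Complex.I * (⟪x, ξ⟫ : ℝ)) * w ξ ∂ν

lemma planeWaveIntegral_const_mul (c : ℂ) (w : E → ℂ) (x : E) :
    planeWaveIntegral ν (fun ξ ↦ c * w ξ) x = c * planeWaveIntegral ν w x := by
  simp only [planeWaveIntegral, mul_left_comm _ c, integral_const_mul]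

variable [BorelSpace E]

lemma integrable_cexp_inner_mul {w : E → ℂ} (hw : Integrable w ν) (x : E) :
    Integrable (fun ξ ↦ Complex.exp (Complex.I * (⟪x, ξ⟫ : ℝ)) * w ξ) ν := by
  refine hw.bdd_mul (c := 1) (Continuous.aestronglyMeasurable (by fun_prop))
    (.of_forall fun ξ ↦ ?_)
  rw [mul_comm, Complex.norm_exp_ofReal_mul_I]

lemma planeWaveIntegral_add {w w' : E → ℂ} (hw : Integrable w ν) (hw' : Integrable w' ν) (x : E) :
    planeWaveIntegral ν (fun ξ ↦ w ξ + w' ξ) x =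
      planeWaveIntegral ν w x + planeWaveIntegral ν w' x := by
  simp only [planeWaveIntegral, mul_add]
  exact integral_add (integrable_cexp_inner_mul hw x) (integrable_cexp_inner_mul hw' x)

lemma planeWaveIntegral_sum {ι : Type*} (s : Finset ι) {w : ι → E → ℂ}
    (hw : ∀ i ∈ s, Integrable (w i) ν) (x : E) :
    planeWaveIntegral ν (fun ξ ↦ ∑ i ∈ s, w i ξ) x = ∑ i ∈ s, planeWaveIntegral ν (w i) x := by
  simp only [planeWaveIntegral, Finset.mul_sum]
  exact integral_finsetSum s fun i hi ↦ integrable_cexp_inner_mul (hw i hi) x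

lemma planeWaveIntegral_eq_comp_smul [FiniteDimensional ℝ E] [ν.IsAddHaarMeasure] {c : ℝ}
    (hc : 0 < c) (w : E → ℂ) (x : E) :
    planeWaveIntegral ν w x =
      ((c ^ Module.finrank ℝ E : ℝ) : ℂ) * planeWaveIntegral ν (fun ξ ↦ w (c • ξ)) (c • x) := by
  have hscale := Measure.integral_comp_smul ν
    (fun ξ ↦ Complex.exp (Complex.I * (⟪x, ξ⟫ : ℝ)) * w ξ) c
  simp only [real_inner_smul_right, ← real_inner_smul_left] at hscale
  have hpow : ((c ^ Module.finrank ℝ E : ℝ) : ℂ) ≠ 0 :=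
    Complex.ofReal_ne_zero.2 (pow_pos hc _).ne'
  rw [planeWaveIntegral, planeWaveIntegral, hscale, abs_of_pos (by positivity),
    Complex.real_smul, Complex.ofReal_inv, mul_inv_cancel_left₀ hpow]

lemma integrable_norm_pow_mul_norm_inner_mul {w : E → ℂ} (hw : AEStronglyMeasurable w ν) {m : ℕ}
    (hw' : Integrable (fun ξ ↦ ‖ξ‖ ^ (m + 1) * ‖w ξ‖) ν) (v : E) :
    Integrable (fun ξ ↦ ‖ξ‖ ^ m * ‖Complex.I * (⟪v, ξ⟫ : ℝ) * w ξ‖) ν := by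
  have hinner : AEStronglyMeasurable (fun ξ : E ↦ Complex.I * ((⟪v, ξ⟫ : ℝ) : ℂ)) ν :=
    Continuous.aestronglyMeasurable (by fun_prop)
  have hpow : AEStronglyMeasurable (fun ξ : E ↦ ‖ξ‖ ^ m) ν :=
    Continuous.aestronglyMeasurable (by fun_prop)
  refine (hw'.const_mul ‖v‖).mono' (hpow.mul (hinner.mul hw).norm) (.of_forall fun ξ ↦ ?_)
  rw [norm_mul, norm_pow, norm_norm, norm_norm, norm_mul, norm_mul, Complex.norm_I, one_mul,
    Complex.norm_real]
  calc ‖ξ‖ ^ m * (‖⟪v, ξ⟫‖ * ‖w ξ‖) ≤ ‖ξ‖ ^ m * (‖v‖ * ‖ξ‖ * ‖w ξ‖) := by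
        gcongr; exact norm_inner_le_norm v ξ
    _ = ‖v‖ * (‖ξ‖ ^ (m + 1) * ‖w ξ‖) := by ring

lemma integrable_inner_mul {w : E → ℂ} (hw : AEStronglyMeasurable w ν)
    (hw' : Integrable (fun ξ ↦ ‖ξ‖ * ‖w ξ‖) ν) (v : E) :
    Integrable (fun ξ ↦ Complex.I * (⟪v, ξ⟫ : ℝ) * w ξ) ν := by
  have hmeas : AEStronglyMeasurable (fun ξ ↦ Complex.I * (⟪v, ξ⟫ : ℝ) * w ξ) ν :=
    (Continuous.aestronglyMeasurable (by fun_prop)).mul hw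
  have hnorm := integrable_norm_pow_mul_norm_inner_mul hw (m := 0)
    (by simpa only [zero_add, pow_one] using hw') v
  simpa only [pow_zero, one_mul, integrable_norm_iff hmeas] using hnorm

variable [SecondCountableTopology E]

lemma fderiv_planeWaveIntegral_apply {w : E → ℂ} (hw : Integrable w ν)
    (hw' : Integrable (fun ξ ↦ ‖ξ‖ * ‖w ξ‖) ν) (x v : E) :
    fderiv ℝ (planeWaveIntegral ν w) x v =
      planeWaveIntegral ν (fun ξ ↦ Complex.I * (⟪v, ξ⟫ : ℝ) * w ξ) x := by
  -- With this pairing the character `e^{-2πi L(ξ, z)}` of `VectorFourier` is `e^{i z·ξ}`.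
  let L : E →L[ℝ] E →L[ℝ] ℝ := -(2 * π)⁻¹ • innerSL ℝ
  have hL (ξ z : E) : L ξ z = -(2 * π)⁻¹ * ⟪z, ξ⟫ := by
    rw [real_inner_comm]; rfl
  have hfourier (g : E → ℂ) :
      VectorFourier.fourierIntegral 𝐞 ν L.toLinearMap₁₂ g = planeWaveIntegral ν g := by
    funext z
    refine integral_congr_ae (.of_forall fun ξ ↦ ?_)
    change (𝐞 (-L ξ z) : ℂ) * g ξ = _
    rw [Real.fourierChar_apply, hL, neg_mul, neg_neg, mul_inv_cancel_left₀ (by positivity),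
      mul_comm (Complex.ofReal _)]
  have hint : Integrable (VectorFourier.fourierSMulRight L w) ν := by
    refine (hw'.const_mul (2 * π * ‖L‖)).mono' hw.1.fourierSMulRight (.of_forall fun ξ ↦ ?_)
    exact (VectorFourier.norm_fourierSMulRight_le L w ξ).trans_eq (mul_assoc _ _ _)
  rw [← hfourier, (VectorFourier.hasFDerivAt_fourierIntegral L hw hw' x).fderiv,
    Real.fourierIntegral_continuousLinearMap_apply' hint, hfourier]
  congr with ξ
  rw [VectorFourier.fourierSMulRight_apply, hL, smul_eq_mul, Complex.real_smul]
  push_cast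
  field_simp

lemma sum_fderiv_fderiv_planeWaveIntegral {ι : Type*} [Fintype ι] (e : OrthonormalBasis ι ℝ E)
    {w : E → ℂ} (hw : AEStronglyMeasurable w ν)
    (hmoments : ∀ m ≤ 2, Integrable (fun ξ ↦ ‖ξ‖ ^ m * ‖w ξ‖) ν) (x : E) :
    ∑ i, fderiv ℝ (fun z ↦ fderiv ℝ (planeWaveIntegral ν w) z (e i)) x (e i) =
      planeWaveIntegral ν (fun ξ ↦ -((‖ξ‖ ^ 2 : ℝ) : ℂ) * w ξ) x := by
  have hw₀ : Integrable w ν := by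
    simpa [integrable_norm_iff hw] using hmoments 0 (by norm_num)
  have hw₁ : Integrable (fun ξ ↦ ‖ξ‖ * ‖w ξ‖) ν := by
    simpa using hmoments 1 (by norm_num)
  have hderiv₀ (v : E) : Integrable (fun ξ ↦ Complex.I * (⟪v, ξ⟫ : ℝ) * w ξ) ν :=
    integrable_inner_mul hw hw₁ v
  have hderiv₁ (v : E) : Integrable (fun ξ ↦ ‖ξ‖ * ‖Complex.I * (⟪v, ξ⟫ : ℝ) * w ξ‖) ν := by
    simpa only [pow_one] using
      integrable_norm_pow_mul_norm_inner_mul hw (m := 1) (hmoments 2 le_rfl) v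
  have hderiv₂ (v : E) :
      Integrable (fun ξ ↦ Complex.I * (⟪v, ξ⟫ : ℝ) * (Complex.I * (⟪v, ξ⟫ : ℝ) * w ξ)) ν :=
    integrable_inner_mul (hderiv₀ v).1 (hderiv₁ v) v
  simp only [fderiv_planeWaveIntegral_apply hw₀ hw₁]
  change ∑ i, fderiv ℝ (planeWaveIntegral ν fun ξ ↦ Complex.I * (⟪e i, ξ⟫ : ℝ) * w ξ) x (e i) = _
  simp only [fderiv_planeWaveIntegral_apply (hderiv₀ _) (hderiv₁ _)]
  rw [← planeWaveIntegral_sum _ fun i _ ↦ hderiv₂ (e i)]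
  congr with ξ
  rw [← e.sum_sq_inner_right ξ, Complex.ofReal_sum, ← Finset.sum_neg_distrib, Finset.sum_mul]
  refine Finset.sum_congr rfl fun i _ ↦ ?_
  push_cast
  linear_combination ((⟪e i, ξ⟫ : ℝ) : ℂ) ^ 2 * w ξ * Complex.I_sq

end PlaneWaves

lemma aestronglyMeasurable_of_hasDerivAt {X G : Type*} [MeasurableSpace X] {ν : Measure X}
    [NormedAddCommGroup G] [NormedSpace ℝ G] {F : ℝ → X → G} {F' : X → G} {y : ℝ}
    (hF : ∀ᶠ z in 𝓝 y, AEStronglyMeasurable (F z) ν)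
    (hF' : ∀ᵐ ξ ∂ν, HasDerivAt (fun z ↦ F z ξ) (F' ξ) y) : AEStronglyMeasurable F' ν := by
  obtain ⟨u, hu, hFu⟩ := exists_seq_forall_of_frequently
    (hF.filter_mono (nhdsWithin_le_nhds (s := {y}ᶜ))).frequently
  refine aestronglyMeasurable_of_tendsto_ae atTop (f := fun m ξ ↦ slope (fun z ↦ F z ξ) y (u m))
    (fun m ↦ ((hFu m).sub hF.self_of_nhds).const_smul (u m - y)⁻¹) ?_
  filter_upwards [hF'] with ξ hξ
  exact (hasDerivAt_iff_tendsto_slope.1 hξ).comp hu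

lemma norm_ofReal_mul_le_of_ne_zero {u C : ℝ} {c : ℂ} (hu : c ≠ 0 → |u| ≤ C) :
    ‖(u : ℂ) * c‖ ≤ C * ‖c‖ := by
  rcases eq_or_ne c 0 with rfl | hc
  · simp only [mul_zero, norm_zero, le_refl]
  · rw [norm_mul, Complex.norm_real, Real.norm_eq_abs]
    exact mul_le_mul_of_nonneg_right (hu hc) (norm_nonneg c)

lemma hasDerivAt_ofReal_mul_of_ne_zero {g : ℝ → ℝ} {c : ℂ} {y : ℝ}
    (hg : c ≠ 0 → DifferentiableAt ℝ g y) :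
    HasDerivAt (fun z ↦ (g z : ℂ) * c) ((deriv g y : ℝ) * c) y := by
  rcases eq_or_ne c 0 with rfl | hc
  · simpa only [mul_zero] using hasDerivAt_const y (0 : ℂ)
  · exact (hg hc).hasDerivAt.ofReal_comp.mul_const c

lemma integrable_ofReal_deriv_mul {X : Type*} [MeasurableSpace X] {ν : Measure X} {g : X → ℝ → ℝ}
    {b : X → ℂ} {y C : ℝ} (hb : Integrable b ν)
    (hgb : ∀ᶠ z in 𝓝 y, AEStronglyMeasurable (fun ξ ↦ (g ξ z : ℂ) * b ξ) ν)
    (hg : ∀ ξ ∈ Function.support b, DifferentiableAt ℝ (g ξ) y)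
    (hC : ∀ ξ ∈ Function.support b, |deriv (g ξ) y| ≤ C) :
    Integrable (fun ξ ↦ ((deriv (g ξ) y : ℝ) : ℂ) * b ξ) ν :=
  (hb.norm.const_mul C).mono'
    (aestronglyMeasurable_of_hasDerivAt hgb
      (.of_forall fun ξ ↦ hasDerivAt_ofReal_mul_of_ne_zero (hg ξ)))
    (.of_forall fun ξ ↦ norm_ofReal_mul_le_of_ne_zero (hC ξ))

lemma integrable_of_continuousOn_of_support_subset {X F : Type*} [TopologicalSpace X] [T2Space X]
    [MeasurableSpace X] [OpensMeasurableSpace X] [NormedAddCommGroup F] {ν : Measure X}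
    [IsFiniteMeasureOnCompacts ν] {K : Set X} (hK : IsCompact K) {g : X → F}
    (hg : ContinuousOn g K) (hgK : Function.support g ⊆ K) : Integrable g ν :=
  (integrableOn_iff_integrable_of_support_subset hgK).1 (hg.integrableOn_compact hK)

section ModeSuperposition

variable {E : Type*} [NormedAddCommGroup E] [InnerProductSpace ℝ E] [MeasurableSpace E]
  {ν : Measure E}

/-- The superposition `∫ e^{i x·ξ} f(ξ, y) b(ξ) dν(ξ)` of the modes `e^{i x·ξ} f(ξ, y)` with
amplitude `b`. -/
def modeSuperposition (ν : Measure E) (f : E → ℝ → ℝ) (b : E → ℂ) (y : ℝ) (x : E) : ℂ :=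
  planeWaveIntegral ν (fun ξ ↦ (f ξ y : ℂ) * b ξ) x

lemma hasDerivAt_modeSuperposition_of_bound [BorelSpace E] {g : E → ℝ → ℝ} {b : E → ℂ} {y C : ℝ}
    (hb : Integrable b ν) (hgb : ∀ᶠ z in 𝓝 y, Integrable (fun ξ ↦ (g ξ z : ℂ) * b ξ) ν)
    (hg : ∀ᶠ z in 𝓝 y, ∀ ξ ∈ Function.support b, DifferentiableAt ℝ (g ξ) z)
    (hC : ∀ᶠ z in 𝓝 y, ∀ ξ ∈ Function.support b, |deriv (g ξ) z| ≤ C) (x : E) :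
    HasDerivAt (fun z ↦ modeSuperposition ν g b z x)
      (modeSuperposition ν (fun ξ ↦ deriv (g ξ)) b y x) y := by
  have hderiv_int : Integrable (fun ξ ↦ ((deriv (g ξ) y : ℝ) : ℂ) * b ξ) ν :=
    integrable_ofReal_deriv_mul hb (hgb.mono fun _ ↦ Integrable.aestronglyMeasurable)
      hg.self_of_nhds hC.self_of_nhds
  refine (hasDerivAt_integral_of_dominated_loc_of_deriv_le (hg.and hC)
    (F' := fun z ξ ↦ Complex.exp (Complex.I * (⟪x, ξ⟫ : ℝ)) * (((deriv (g ξ) z : ℝ) : ℂ) * b ξ))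
    (hgb.mono fun z hz ↦ (integrable_cexp_inner_mul hz x).1)
    (integrable_cexp_inner_mul hgb.self_of_nhds x)
    (integrable_cexp_inner_mul hderiv_int x).1
    (.of_forall fun ξ z hz ↦ ?_) (hb.norm.const_mul C) (.of_forall fun ξ z hz ↦ ?_)).2
  · rw [norm_mul, mul_comm Complex.I, Complex.norm_exp_ofReal_mul_I, one_mul]
    exact norm_ofReal_mul_le_of_ne_zero (hz.2 ξ)
  · exact (hasDerivAt_ofReal_mul_of_ne_zero (hz.1 ξ)).const_mul _

end ModeSuperposition

/-- A family of normal modes `f ξ` with the common eigenvalue `lam`, one for each tangential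
frequency `ξ` in the compact set `K`, depending continuously on `ξ`. -/
structure IsNormalModeFamily {E : Type*} [NormedAddCommGroup E] (κ lam : ℝ) (K : Set E)
    (f : E → ℝ → ℝ) : Prop where
  isCompact : IsCompact K
  continuousOn : ContinuousOn (Function.uncurry f) (K ×ˢ Ioi 0)
  isNormalMode : ∀ ξ ∈ K, IsNormalMode κ lam ‖ξ‖ (f ξ)

namespace IsNormalModeFamily

variable {E : Type*} [NormedAddCommGroup E] {κ lam y : ℝ} {K : Set E} {f : E → ℝ → ℝ}

lemma exists_eventually_bound_deriv (hf : IsNormalModeFamily κ lam K f) (hκ : κ ≠ 0)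
    (hy : 0 < y) :
    ∃ C, ∀ᶠ z in 𝓝 y, ∀ ξ ∈ K, |deriv (f ξ) z| ≤ C ∧ |deriv (deriv (f ξ)) z| ≤ C :=
  IsNormalMode.exists_eventually_bound_deriv hf.isCompact hκ continuousOn_id.norm hf.continuousOn
    hf.isNormalMode hy

variable [MeasurableSpace E] [BorelSpace E] {ν : Measure E} [IsFiniteMeasureOnCompacts ν]
  {b : E → ℂ}

lemma integrable_norm_pow_mul (hf : IsNormalModeFamily κ lam K f) (hb : ContinuousOn b K)
    (hbK : Function.support b ⊆ K) (hy : 0 < y) (m : ℕ) :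
    Integrable (fun ξ ↦ ((‖ξ‖ ^ m : ℝ) : ℂ) * ((f ξ y : ℂ) * b ξ)) ν := by
  have hfy : ContinuousOn (fun ξ ↦ f ξ y) K :=
    hf.continuousOn.comp (f := fun ξ ↦ (ξ, y)) (by fun_prop) fun ξ hξ ↦ ⟨hξ, hy⟩
  refine integrable_of_continuousOn_of_support_subset hf.isCompact (by fun_prop) ?_
  exact (Function.support_mul_subset_right _ _).trans
    ((Function.support_mul_subset_right _ _).trans hbK)

lemma integrable_mul (hf : IsNormalModeFamily κ lam K f) (hb : ContinuousOn b K)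
    (hbK : Function.support b ⊆ K) (hy : 0 < y) : Integrable (fun ξ ↦ (f ξ y : ℂ) * b ξ) ν := by
  simpa only [pow_zero, Complex.ofReal_one, one_mul] using
    hf.integrable_norm_pow_mul hb hbK hy 0

lemma integrable_deriv_mul (hf : IsNormalModeFamily κ lam K f) (hκ : κ ≠ 0)
    (hb : ContinuousOn b K) (hbK : Function.support b ⊆ K) (hy : 0 < y) :
    Integrable (fun ξ ↦ ((deriv (f ξ) y : ℝ) : ℂ) * b ξ) ν := by
  obtain ⟨C, hC⟩ := hf.exists_eventually_bound_deriv hκ hy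
  exact integrable_ofReal_deriv_mul
    (integrable_of_continuousOn_of_support_subset hf.isCompact hb hbK)
    ((eventually_gt_nhds hy).mono fun z hz ↦ (hf.integrable_mul hb hbK hz).1)
    (fun ξ hξ ↦ (hf.isNormalMode ξ (hbK hξ)).differentiableAt y hy)
    (fun ξ hξ ↦ (hC.self_of_nhds ξ (hbK hξ)).1)

lemma integrable_deriv_deriv_mul (hf : IsNormalModeFamily κ lam K f) (hκ : κ ≠ 0)
    (hb : ContinuousOn b K) (hbK : Function.support b ⊆ K) (hy : 0 < y) :
    Integrable (fun ξ ↦ ((deriv (deriv (f ξ)) y : ℝ) : ℂ) * b ξ) ν := by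
  obtain ⟨C, hC⟩ := hf.exists_eventually_bound_deriv hκ hy
  exact integrable_ofReal_deriv_mul
    (integrable_of_continuousOn_of_support_subset hf.isCompact hb hbK)
    ((eventually_gt_nhds hy).mono fun z hz ↦ (hf.integrable_deriv_mul hκ hb hbK hz).1)
    (fun ξ hξ ↦ (hf.isNormalMode ξ (hbK hξ)).differentiableAt_deriv y hy)
    (fun ξ hξ ↦ (hC.self_of_nhds ξ (hbK hξ)).2)

variable [InnerProductSpace ℝ E]

lemma hasDerivAt_modeSuperposition (hf : IsNormalModeFamily κ lam K f) (hκ : κ ≠ 0)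
    (hb : ContinuousOn b K) (hbK : Function.support b ⊆ K) (hy : 0 < y) (x : E) :
    HasDerivAt (fun z ↦ modeSuperposition ν f b z x)
      (modeSuperposition ν (fun ξ ↦ deriv (f ξ)) b y x) y := by
  obtain ⟨C, hC⟩ := hf.exists_eventually_bound_deriv hκ hy
  have hpos : ∀ᶠ z in 𝓝 y, 0 < z := eventually_gt_nhds hy
  exact hasDerivAt_modeSuperposition_of_bound
    (integrable_of_continuousOn_of_support_subset hf.isCompact hb hbK)
    (hpos.mono fun z hz ↦ hf.integrable_mul hb hbK hz)
    (hpos.mono fun z hz ξ hξ ↦ (hf.isNormalMode ξ (hbK hξ)).differentiableAt z hz)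
    (hC.mono fun z hz ξ hξ ↦ (hz ξ (hbK hξ)).1) x

lemma hasDerivAt_modeSuperposition_deriv (hf : IsNormalModeFamily κ lam K f) (hκ : κ ≠ 0)
    (hb : ContinuousOn b K) (hbK : Function.support b ⊆ K) (hy : 0 < y) (x : E) :
    HasDerivAt (fun z ↦ modeSuperposition ν (fun ξ ↦ deriv (f ξ)) b z x)
      (modeSuperposition ν (fun ξ ↦ deriv (deriv (f ξ))) b y x) y := by
  obtain ⟨C, hC⟩ := hf.exists_eventually_bound_deriv hκ hy
  have hpos : ∀ᶠ z in 𝓝 y, 0 < z := eventually_gt_nhds hy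
  exact hasDerivAt_modeSuperposition_of_bound
    (integrable_of_continuousOn_of_support_subset hf.isCompact hb hbK)
    (hpos.mono fun z hz ↦ hf.integrable_deriv_mul hκ hb hbK hz)
    (hpos.mono fun z hz ξ hξ ↦ (hf.isNormalMode ξ (hbK hξ)).differentiableAt_deriv z hz)
    (hC.mono fun z hz ξ hξ ↦ (hz ξ (hbK hξ)).2) x

lemma deriv_deriv_modeSuperposition (hf : IsNormalModeFamily κ lam K f) (hκ : κ ≠ 0)
    (hb : ContinuousOn b K) (hbK : Function.support b ⊆ K) (hy : 0 < y) (x : E) :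
    deriv (fun z ↦ deriv (fun z' ↦ modeSuperposition ν f b z' x) z) y =
      modeSuperposition ν (fun ξ ↦ deriv (deriv (f ξ))) b y x := by
  have hderiv : (fun z ↦ deriv (fun z' ↦ modeSuperposition ν f b z' x) z) =ᶠ[𝓝 y]
      fun z ↦ modeSuperposition ν (fun ξ ↦ deriv (f ξ)) b z x :=
    (eventually_gt_nhds hy).mono fun z hz ↦
      (hf.hasDerivAt_modeSuperposition hκ hb hbK hz x).deriv
  rw [hderiv.deriv_eq, (hf.hasDerivAt_modeSuperposition_deriv hκ hb hbK hy x).deriv]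

lemma sum_fderiv_fderiv_modeSuperposition [SecondCountableTopology E] {ι : Type*} [Fintype ι]
    (e : OrthonormalBasis ι ℝ E) (hf : IsNormalModeFamily κ lam K f)
    (hb : ContinuousOn b K) (hbK : Function.support b ⊆ K) (hy : 0 < y) (x : E) :
    ∑ i, fderiv ℝ (fun z ↦ fderiv ℝ (modeSuperposition ν f b y) z (e i)) x (e i) =
      planeWaveIntegral ν (fun ξ ↦ -((‖ξ‖ ^ 2 : ℝ) : ℂ) * ((f ξ y : ℂ) * b ξ)) x := by
  refine sum_fderiv_fderiv_planeWaveIntegral e (hf.integrable_mul hb hbK hy).1 (fun m _ ↦ ?_) x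
  refine (hf.integrable_norm_pow_mul (ν := ν) hb hbK hy m).norm.congr (.of_forall fun ξ ↦ ?_)
  simp only [norm_mul, Complex.norm_real, norm_pow, norm_norm]

end IsNormalModeFamily

/-- The spatial part `κ y (∂_y² + Δ_x) + ∂_y` of the acoustic wave equation on the half-space, in
the normal variable `y` and the tangential variables `x`. -/
def acousticOperator {n : ℕ} (κ : ℝ) (V : ℝ → EuclideanSpace ℝ (Fin n) → ℂ) (y : ℝ)
    (x : EuclideanSpace ℝ (Fin n)) : ℂ :=
  ((κ * y : ℝ) : ℂ) *
      (deriv (fun z ↦ deriv (fun z' ↦ V z' x) z) y +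
        ∑ i, fderiv ℝ (fun z ↦ fderiv ℝ (fun z' ↦ V y z') z (EuclideanSpace.single i 1)) x
          (EuclideanSpace.single i 1)) +
    deriv (fun z ↦ V z x) y

theorem acousticOperator_modeSuperposition {n : ℕ} {ν : Measure (EuclideanSpace ℝ (Fin n))}
    [IsFiniteMeasureOnCompacts ν] {κ lam y : ℝ} {K : Set (EuclideanSpace ℝ (Fin n))}
    {f : EuclideanSpace ℝ (Fin n) → ℝ → ℝ} {b : EuclideanSpace ℝ (Fin n) → ℂ}
    (hf : IsNormalModeFamily κ lam K f) (hκ : κ ≠ 0) (hb : ContinuousOn b K)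
    (hbK : Function.support b ⊆ K) (hy : 0 < y) (x : EuclideanSpace ℝ (Fin n)) :
    acousticOperator κ (modeSuperposition ν f b) y x = -lam * modeSuperposition ν f b y x := by
  have htangential := hf.sum_fderiv_fderiv_modeSuperposition (ν := ν)
    (EuclideanSpace.basisFun (Fin n) ℝ) hb hbK hy x
  simp only [EuclideanSpace.basisFun_apply] at htangential
  have hsecond := hf.integrable_deriv_deriv_mul (ν := ν) hκ hb hbK hy
  have hlaplace : Integrable (fun ξ ↦ -((‖ξ‖ ^ 2 : ℝ) : ℂ) * ((f ξ y : ℂ) * b ξ)) ν := by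
    simpa only [neg_mul] using (hf.integrable_norm_pow_mul hb hbK hy 2).fun_neg
  rw [acousticOperator, htangential, hf.deriv_deriv_modeSuperposition hκ hb hbK hy x,
    (hf.hasDerivAt_modeSuperposition hκ hb hbK hy x).deriv]
  simp only [modeSuperposition]
  rw [← planeWaveIntegral_add hsecond hlaplace, ← planeWaveIntegral_const_mul,
    ← planeWaveIntegral_add ((hsecond.fun_add hlaplace).const_mul _)
      (hf.integrable_deriv_mul hκ hb hbK hy), ← planeWaveIntegral_const_mul]
  congr with ξ
  by_cases hξ : b ξ = 0
  · simp only [hξ, mul_zero, add_zero]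
  · have hode := congrArg ((↑) : ℝ → ℂ) ((hf.isNormalMode ξ (hbK hξ)).ode y hy)
    push_cast at hode ⊢
    linear_combination b ξ * hode

/-- The gallery mode `B(M/|ξ|, |ξ| y)` at tangential frequency `ξ`: the profile parameter is chosen
so that the eigenvalue is `M` whatever `ξ` is. -/
def galleryMode {E : Type*} [Norm E] (B : ℝ → ℝ → ℝ) (M : ℝ) (ξ : E) (y : ℝ) : ℝ :=
  B (M / ‖ξ‖) (‖ξ‖ * y)

lemma isNormalMode_galleryMode {E : Type*} [NormedAddCommGroup E] {B : ℝ → ℝ → ℝ} {κ M : ℝ}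
    (hB : ∀ μ, 0 < μ → IsNormalMode κ μ 1 (B μ)) (hM : 0 < M) {ξ : E} (hξ : ξ ≠ 0) :
    IsNormalMode κ M ‖ξ‖ (galleryMode B M ξ) := by
  have hnorm : 0 < ‖ξ‖ := norm_pos_iff.2 hξ
  have hscaled := (hB (M / ‖ξ‖) (div_pos hM hnorm)).comp_mul_left hnorm
  rwa [mul_div_cancel₀ M hnorm.ne', mul_one] at hscaled

lemma isNormalModeFamily_galleryMode {E : Type*} [NormedAddCommGroup E] {B : ℝ → ℝ → ℝ}
    {κ M : ℝ} {K : Set E} (hBc : ContinuousOn (Function.uncurry B) (Ioi 0 ×ˢ Ioi 0))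
    (hB : ∀ μ, 0 < μ → IsNormalMode κ μ 1 (B μ)) (hM : 0 < M) (hK : IsCompact K)
    (hK₀ : (0 : E) ∉ K) : IsNormalModeFamily κ M K (galleryMode B M) := by
  have hne {ξ : E} (hξ : ξ ∈ K) : ξ ≠ 0 := ne_of_mem_of_not_mem hξ hK₀
  have hnorm {ξ : E} (hξ : ξ ∈ K) : 0 < ‖ξ‖ := norm_pos_iff.2 (hne hξ)
  refine ⟨hK, ?_, fun ξ hξ ↦ isNormalMode_galleryMode hB hM (hne hξ)⟩
  refine hBc.comp (f := fun p : E × ℝ ↦ (M / ‖p.1‖, ‖p.1‖ * p.2))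
    (ContinuousOn.prodMk ?_ (by fun_prop))
    fun p hp ↦ ⟨div_pos hM (hnorm hp.1), mul_pos (hnorm hp.1) hp.2⟩
  exact ContinuousOn.div (by fun_prop) (by fun_prop) fun p hp ↦ (hnorm hp.1).ne'

section WavePacket

variable {d : ℕ} {B : ℝ → ℝ → ℝ} {a : EuclideanSpace ℝ (Fin (d - 1)) → ℝ}

/-- The amplitude `(2π)^{1-d} e^{it2^j} a(2^{-2j}ξ)` of the gallery mode with tangential frequency
`ξ` in the wave packet `U^j` at time `t`. -/
def packetAmplitude (d : ℕ) (a : EuclideanSpace ℝ (Fin (d - 1)) → ℝ) (j : ℕ) (t : ℝ)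
    (ξ : EuclideanSpace ℝ (Fin (d - 1))) : ℂ :=
  (((2 * π) ^ ((1 : ℤ) - (d : ℤ)) : ℝ) : ℂ) * Complex.exp (Complex.I * ((t * 2 ^ j : ℝ) : ℂ)) *
    (a (((2 : ℝ) ^ (2 * j))⁻¹ • ξ) : ℂ)

lemma wavePacket_eq_modeSuperposition (j : ℕ) (t : ℝ) :
    wavePacket d B a j t =
      modeSuperposition volume (galleryMode B (2 ^ (2 * j))) (packetAmplitude d a j t) := by
  funext y x
  rw [wavePacket, ← integral_const_mul]
  refine integral_congr_ae (.of_forall fun ξ ↦ ?_)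
  simp only [galleryMode, packetAmplitude]
  ring

theorem wavePacket_eq_rescale (j : ℕ) (t y : ℝ) (x : EuclideanSpace ℝ (Fin (d - 1))) :
    wavePacket d B a j t y x =
      (((2 : ℝ) ^ (2 * j * (d - 1)) : ℝ) : ℂ) *
        wavePacket d B a 0 (2 ^ j * t) ((2 : ℝ) ^ (2 * j) * y) (((2 : ℝ) ^ (2 * j)) • x) := by
  have hM : (0 : ℝ) < 2 ^ (2 * j) := by positivity
  rw [wavePacket_eq_modeSuperposition, wavePacket_eq_modeSuperposition, modeSuperposition,
    planeWaveIntegral_eq_comp_smul hM, finrank_euclideanSpace_fin, ← pow_mul]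
  congr 2 with ξ
  simp only [galleryMode, packetAmplitude, norm_smul, Real.norm_of_nonneg hM.le, smul_smul,
    inv_mul_cancel₀ hM.ne', mul_zero, pow_zero, inv_one, one_smul, mul_one, mul_comm t]
  rw [← div_div, div_self hM.ne', mul_left_comm ‖ξ‖, ← mul_assoc (2 ^ (2 * j))]

lemma deriv_wavePacket (j : ℕ) (y : ℝ) (x : EuclideanSpace ℝ (Fin (d - 1))) :
    deriv (fun s ↦ wavePacket d B a j s y x) =
      fun t ↦ Complex.I * 2 ^ j * wavePacket d B a j t y x := by
  funext t
  have hphase : HasDerivAt (fun s : ℝ ↦ Complex.I * ((s * 2 ^ j : ℝ) : ℂ))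
      (Complex.I * ((1 * 2 ^ j : ℝ) : ℂ)) t :=
    (((hasDerivAt_id t).mul_const (2 ^ j)).ofReal_comp).const_mul Complex.I
  simp only [wavePacket]
  rw [((hphase.cexp.const_mul _).mul_const _).deriv]
  push_cast
  ring

lemma deriv_deriv_wavePacket (j : ℕ) (t y : ℝ) (x : EuclideanSpace ℝ (Fin (d - 1))) :
    deriv (fun s ↦ deriv (fun s' ↦ wavePacket d B a j s' y x) s) t =
      -((2 ^ (2 * j) : ℝ) : ℂ) * wavePacket d B a j t y x := by
  simp only [deriv_wavePacket, deriv_const_mul_field]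
  push_cast
  linear_combination (2 ^ j) ^ 2 * wavePacket d B a j t y x * Complex.I_sq

theorem acousticOperator_wavePacket {κ : ℝ} (hκ : κ ≠ 0) (ha : Continuous a)
    (hac : HasCompactSupport a) (ha₀ : 0 ∉ tsupport a)
    (hBc : ContinuousOn (Function.uncurry B) (Ioi 0 ×ˢ Ioi 0))
    (hB : ∀ μ, 0 < μ → IsNormalMode κ μ 1 (B μ)) (j : ℕ) (t : ℝ) {y : ℝ} (hy : 0 < y)
    (x : EuclideanSpace ℝ (Fin (d - 1))) :
    acousticOperator κ (wavePacket d B a j t) y x =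
      -((2 ^ (2 * j) : ℝ) : ℂ) * wavePacket d B a j t y x := by
  have hM : (0 : ℝ) < 2 ^ (2 * j) := by positivity
  set a' : EuclideanSpace ℝ (Fin (d - 1)) → ℝ := fun ξ ↦ a (((2 : ℝ) ^ (2 * j))⁻¹ • ξ)
  have ha'₀ : 0 ∉ tsupport a' := fun h ↦ ha₀ <| by
    simpa only [mem_preimage, smul_zero] using
      tsupport_comp_subset_preimage a (continuous_const_smul _) h
  have hmodes : IsNormalModeFamily κ (2 ^ (2 * j)) (tsupport a') (galleryMode B (2 ^ (2 * j))) :=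
    isNormalModeFamily_galleryMode hBc hB hM (hac.comp_smul (inv_ne_zero hM.ne')) ha'₀
  have hamp : Continuous (packetAmplitude d a j t) := by
    unfold packetAmplitude; fun_prop
  have hsupp : Function.support (packetAmplitude d a j t) ⊆ tsupport a' := fun ξ hξ ↦
    subset_tsupport _ (Complex.ofReal_ne_zero.1 (right_ne_zero_of_mul hξ))
  rw [wavePacket_eq_modeSuperposition]
  exact acousticOperator_modeSuperposition hmodes hκ hamp.continuousOn hsupp hy x

end WavePacket

theorem stmt16_general {n : ℕ} {κ : ℝ} (hκ : κ ≠ 0) {a : EuclideanSpace ℝ (Fin n) → ℝ}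
    (ha : Continuous a) (hac : HasCompactSupport a) (ha₀ : 0 ∉ tsupport a) {B : ℝ → ℝ → ℝ}
    (hBc : ContinuousOn (Function.uncurry B) (Ioi 0 ×ˢ Ioi 0))
    (hB : ∀ μ, 0 < μ → IsNormalMode κ μ 1 (B μ)) (j : ℕ) (t y : ℝ)
    (x : EuclideanSpace ℝ (Fin n)) :
    wavePacket (n + 1) B a j t y x =
        (((2 : ℝ) ^ (2 * j * n) : ℝ) : ℂ) *
          wavePacket (n + 1) B a 0 (2 ^ j * t) ((2 : ℝ) ^ (2 * j) * y) (((2 : ℝ) ^ (2 * j)) • x) ∧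
      (0 < y → deriv (fun s ↦ deriv (fun s' ↦ wavePacket (n + 1) B a j s' y x) s) t =
        acousticOperator κ (wavePacket (n + 1) B a j t) y x) :=
  ⟨wavePacket_eq_rescale (d := n + 1) j t y x,
    fun hy ↦ (deriv_deriv_wavePacket (d := n + 1) j t y x).trans
    (acousticOperator_wavePacket (d := n + 1) hκ ha hac ha₀ hBc hB j t hy x).symm⟩

/-- the wave packets `U^j` rescale onto `U^0` and are exact
solutions of the acoustic wave equation `∂_t²U − κx_dΔU − ∂_{x_d}U = 0`. -/
theorem stmt16 {d : ℕ} (hd : 2 ≤ d) (κ : ℝ) (hκ : 0 < κ)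
    (ε : ℝ) (hε : 0 < ε) (hε1 : ε < 1)
    (a : EuclideanSpace ℝ (Fin (d - 1)) → ℝ)
    (ha : ContDiff ℝ (⊤ : ℕ∞) a) (hac : HasCompactSupport a)
    (hasupp : tsupport a ⊆
      {η : EuclideanSpace ℝ (Fin (d - 1)) | 1 - ε ≤ ‖η‖ ∧ ‖η‖ ≤ 1 + ε})
    (B : ℝ → ℝ → ℝ)
    (hBcont : ContinuousOn (fun p : ℝ × ℝ => B p.1 p.2) (Set.Ioi 0 ×ˢ Set.Ici 0))
    (hBC2 : ∀ μ : ℝ, 0 < μ → ContDiffOn ℝ 2 (B μ) (Set.Ioi 0))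
    (hBloc : ∀ μ : ℝ, 0 < μ → ∀ K : Set ℝ, IsCompact K → K ⊆ Set.Ici 0 →
      ∃ C : ℝ, ∀ y ∈ K ∩ Set.Ioi 0,
        |B μ y| + |deriv (B μ) y| + |deriv (deriv (B μ)) y| ≤ C)
    (hODE : ∀ μ : ℝ, 0 < μ → ∀ y : ℝ, 0 < y →
      κ * y * deriv (deriv (B μ)) y + deriv (B μ) y + (μ - κ * y) * B μ y = 0) :
    (∀ j : ℕ, ∀ t xd : ℝ, 0 < xd → ∀ x' : EuclideanSpace ℝ (Fin (d - 1)),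
      wavePacket d B a j t xd x'
        = (((2 : ℝ) ^ (2 * j * (d - 1)) : ℝ) : ℂ) *
            wavePacket d B a 0 (2 ^ j * t) ((2 : ℝ) ^ (2 * j) * xd)
              (((2 : ℝ) ^ (2 * j)) • x')) ∧
    (∀ j : ℕ, ∀ t xd : ℝ, 0 < xd → ∀ x' : EuclideanSpace ℝ (Fin (d - 1)),
      deriv (fun s => deriv (fun s' => wavePacket d B a j s' xd x') s) t
        - ((κ * xd : ℝ) : ℂ) *
            (deriv (fun y => deriv (fun y' => wavePacket d B a j t y' x') y) xd
              + ∑ i : Fin (d - 1),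
                  fderiv ℝ (fun z => fderiv ℝ
                    (fun z' => wavePacket d B a j t xd z') z
                    (EuclideanSpace.single i 1)) x' (EuclideanSpace.single i 1))
        - deriv (fun y => wavePacket d B a j t y x') xd = 0) := by
  obtain ⟨n, rfl⟩ : ∃ n, d = n + 1 := ⟨d - 1, by omega⟩
  have ha₀ : 0 ∉ tsupport a := fun h ↦ by
    simpa only [norm_zero, sub_nonpos, hε1.not_ge] using (hasupp h).1
  have hpacket := stmt16_general hκ.ne' ha.continuous hac ha₀
    (hBcont.mono (prod_mono_right Ioi_subset_Ici_self))
    fun μ hμ ↦ .of_contDiffOn (hBC2 μ hμ) (hODE μ hμ)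
  refine ⟨fun j t xd _ x' ↦ (hpacket j t xd x').1, fun j t xd hxd x' ↦ ?_⟩
  exact (sub_sub _ _ _).trans (sub_eq_zero.2 ((hpacket j t xd x').2 hxd))

end
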